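/- Let F : ℝⁿ ⇉ ℝᵐ be a set-valued map and (x̄, ȳ) ∈ gph F. If F is strongly metrically regular at x̄ for ȳ, then |D̃F(x̄|ȳ)⁻¹|⁺ < ∞. Conversely, if the graph of F is locally closed at (x̄, ȳ) and x̄ ∈ liminf_{y → ȳ} F⁻¹(y) (i.e., for every ε > 0 there is a neighborhood V of ȳ such that F⁻¹(y) ∩ B_ε(x̄) ≠ ∅ for all y ∈ V), then |D̃F(x̄|ȳ)⁻¹|⁺ < ∞ implies that F is strongly metrically regular at x̄ for ȳ, and in that case reg(F; x̄|ȳ) = |D̃F(x̄|ȳ)⁻¹|⁺. -/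

import Mathlib

open Filter Topology Set Metric RealInnerProductSpace
open scoped ENNReal NNReal Pointwise

noncomputable section

/-- Graph of a set-valued map. -/
def svGraph {α β : Type*} (F : α → Set β) : Set (α × β) := {p | p.2 ∈ F p.1}

/-- Inverse of a set-valued map. -/
def svInv {α β : Type*} (F : α → Set β) : β → Set α := fun y => {x | y ∈ F x}

/-- Local closedness of a set at a point of a metric space. -/
def LocClosedAt {α : Type*} [PseudoMetricSpace α] (s : Set α) (p : α) : Prop :=
  ∃ r : ℝ, 0 < r ∧ IsClosed (s ∩ Metric.closedBall p r)

section Cones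

variable {X : Type*} [NormedAddCommGroup X] [NormedSpace ℝ X]

/-- Bouligand-Severi contingent cone. -/
def contingentCone (Ω : Set X) (x : X) : Set X :=
  { u | ∃ (t : ℕ → ℝ) (uk : ℕ → X), (∀ k, 0 < t k) ∧
      Tendsto t atTop (𝓝 0) ∧ Tendsto uk atTop (𝓝 u) ∧ ∀ k, x + t k • uk k ∈ Ω }

/-- Bouligand paratingent cone. -/
def paratingentCone (Ω : Set X) (x : X) : Set X :=
  { u | ∃ (t : ℕ → ℝ) (uk : ℕ → X) (xk : ℕ → X), (∀ k, 0 < t k) ∧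
      Tendsto t atTop (𝓝 0) ∧ Tendsto uk atTop (𝓝 u) ∧
      (∀ k, xk k ∈ Ω) ∧ Tendsto xk atTop (𝓝 x) ∧ ∀ k, xk k + t k • uk k ∈ Ω }

end Cones

section NormalCones

variable {X : Type*} [NormedAddCommGroup X] [InnerProductSpace ℝ X]

/-- Fréchet (regular) normal cone. -/
def frechetNormalCone (Ω : Set X) (x : X) : Set X :=
  { v | ∀ ε : ℝ, 0 < ε → ∃ δ : ℝ, 0 < δ ∧ ∀ y ∈ Ω, ‖y - x‖ < δ →
      ⟪v, y - x⟫ ≤ ε * ‖y - x‖ }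

/-- Limiting (Mordukhovich) normal cone. -/
def limitingNormalCone (Ω : Set X) (x : X) : Set X :=
  { v | ∃ (xk : ℕ → X) (vk : ℕ → X), (∀ k, xk k ∈ Ω) ∧
      Tendsto xk atTop (𝓝 x) ∧ Tendsto vk atTop (𝓝 v) ∧
      ∀ k, vk k ∈ frechetNormalCone Ω (xk k) }

end NormalCones

section Derivatives

variable {E F : Type*} [NormedAddCommGroup E] [NormedSpace ℝ E]
  [NormedAddCommGroup F] [NormedSpace ℝ F]

/-- Graphical derivative. -/
def gDeriv (Fm : E → Set F) (x : E) (y : F) : E → Set F := fun u =>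
  {v | (u, v) ∈ contingentCone (svGraph Fm) (x, y)}

/-- Strict graphical derivative. -/
def sgDeriv (Fm : E → Set F) (x : E) (y : F) : E → Set F := fun u =>
  {v | (u, v) ∈ paratingentCone (svGraph Fm) (x, y)}

end Derivatives

section Coderivative

variable {E F : Type*} [NormedAddCommGroup E] [InnerProductSpace ℝ E]
  [NormedAddCommGroup F] [InnerProductSpace ℝ F]

/-- Coderivative: `w ∈ D*F(x|y)(z)` iff `(w, -z)` is in the limiting normal cone
to the graph of `F` (viewed inside the `ℓ²` product) at `(x, y)`. -/
def coDeriv (Fm : E → Set F) (x : E) (y : F) : F → Set E := fun z =>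
  { w | (WithLp.equiv 2 (E × F)).symm (w, -z) ∈
      limitingNormalCone ((WithLp.equiv 2 (E × F)).symm '' svGraph Fm)
        ((WithLp.equiv 2 (E × F)).symm (x, y)) }

end Coderivative

section Norms

variable {E F : Type*} [NormedAddCommGroup E] [NormedAddCommGroup F]

/-- Outer norm of a (positively homogeneous) set-valued map. -/
def outerNormSV (H : E → Set F) : ℝ≥0∞ :=
  ⨆ (x : E) (_ : ‖x‖ ≤ 1) (y : F) (_ : y ∈ H x), (‖y‖₊ : ℝ≥0∞)

/-- Inner norm of a (positively homogeneous) set-valued map. -/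
def innerNormSV (H : E → Set F) : ℝ≥0∞ :=
  ⨆ (x : E) (_ : ‖x‖ ≤ 1), ⨅ (y : F) (_ : y ∈ H x), (‖y‖₊ : ℝ≥0∞)

/-- Positive homogeneity of a set-valued map. -/
def PosHomogeneous {E F : Type*} [NormedAddCommGroup E] [NormedSpace ℝ E]
    [NormedAddCommGroup F] [NormedSpace ℝ F] (H : E → Set F) : Prop :=
  (0 : F) ∈ H 0 ∧ ∀ (c : ℝ), 0 < c → ∀ x, H (c • x) = c • (H x)

end Norms

section Stability

variable {E F : Type*} [NormedAddCommGroup E] [NormedAddCommGroup F]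

/-- Metric regularity with constant `κ`. -/
def MetrRegWith (κ : ℝ≥0) (Fm : E → Set F) (xbar : E) (ybar : F) : Prop :=
  ∃ U ∈ 𝓝 xbar, ∃ V ∈ 𝓝 ybar, ∀ x ∈ U, ∀ y ∈ V,
    EMetric.infEdist x (svInv Fm y) ≤ (κ : ℝ≥0∞) * EMetric.infEdist y (Fm x)

/-- The regularity modulus `reg (F; xbar|ybar)`. -/
def regMod (Fm : E → Set F) (xbar : E) (ybar : F) : ℝ≥0∞ :=
  ⨅ (κ : ℝ≥0) (_ : MetrRegWith κ Fm xbar ybar), (κ : ℝ≥0∞)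

/-- Aubin property with constant `κ`. -/
def AubinWith (κ : ℝ≥0) (S : F → Set E) (ybar : F) (xbar : E) : Prop :=
  ∃ V ∈ 𝓝 ybar, ∃ U ∈ 𝓝 xbar, ∀ y ∈ V, ∀ y' ∈ V, ∀ x ∈ S y' ∩ U,
    ∃ x' ∈ S y, ‖x - x'‖ ≤ (κ : ℝ) * ‖y - y'‖

/-- The Lipschitz modulus `lip (S; ybar|xbar)`. -/
def lipMod (S : F → Set E) (ybar : F) (xbar : E) : ℝ≥0∞ :=
  ⨅ (κ : ℝ≥0) (_ : AubinWith κ S ybar xbar), (κ : ℝ≥0∞)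

/-- Strong metric subregularity with constant `κ`. -/
def SubregWith (κ : ℝ≥0) (Fm : E → Set F) (xbar : E) (ybar : F) : Prop :=
  ∃ U ∈ 𝓝 xbar, ∀ x ∈ U, (‖x - xbar‖₊ : ℝ≥0∞) ≤ (κ : ℝ≥0∞) * EMetric.infEdist ybar (Fm x)

/-- The subregularity modulus `subreg (F; xbar|ybar)`. -/
def subregMod (Fm : E → Set F) (xbar : E) (ybar : F) : ℝ≥0∞ :=
  ⨅ (κ : ℝ≥0) (_ : SubregWith κ Fm xbar ybar), (κ : ℝ≥0∞)

/-- Isolated calmness with constant `κ`. -/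
def CalmWith (κ : ℝ≥0) (S : F → Set E) (ybar : F) (xbar : E) : Prop :=
  ∃ V ∈ 𝓝 ybar, ∃ U ∈ 𝓝 xbar, ∀ y ∈ V, ∀ x ∈ S y ∩ U, ‖x - xbar‖ ≤ (κ : ℝ) * ‖y - ybar‖

/-- The calmness modulus `clm (S; ybar|xbar)`. -/
def clmMod (S : F → Set E) (ybar : F) (xbar : E) : ℝ≥0∞ :=
  ⨅ (κ : ℝ≥0) (_ : CalmWith κ S ybar xbar), (κ : ℝ≥0∞)

/-- Strong metric regularity: metric regularity plus a single-valued localization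
of the inverse. -/
def StrongMetrReg (Fm : E → Set F) (xbar : E) (ybar : F) : Prop :=
  (∃ κ : ℝ≥0, MetrRegWith κ Fm xbar ybar) ∧
  ∃ U ∈ 𝓝 xbar, ∃ V ∈ 𝓝 ybar, ∀ y ∈ V, (svInv Fm y ∩ U).Subsingleton

end Stability

/-!
Elements of the paratingent cone to `gph S` at `(a, b)` are limits of rescaled secants of `gph S`
near `(a, b)`. A Lipschitz bound with constant `κ` along the graph therefore passes to the limit and
gives `|D̃S(a|b)|⁺ ≤ κ`. Conversely, if the bound fails arbitrarily close to `(a, b)`, rescale the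
offending secants so that their second component has norm `κ`; their first component then has norm
at most `1`, and by compactness they accumulate at a pair that forces `|D̃S(a|b)|⁺ ≥ κ`.

This is applied to `S = F⁻¹`, for which `D̃S = (D̃F)⁻¹`. Metric regularity with constant `κ` and a
single-valued localization of `F⁻¹` give the Lipschitz bound along the graph because the distance to
`F⁻¹(y)` is then the distance to its only nearby point. Conversely, the Lipschitz bound applied to
a point of `F⁻¹(y)` near `x̄`, which the inner limit condition provides, bounds the distance to
`F⁻¹(y)`, so the two notions share their constants.
-/

section LocalizationNotions

/-- The inner (Painlevé–Kuratowski) limit of a family of sets along a filter; with `l = 𝓝 a` it is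
the set `liminf_{x → a} S x`. -/
def innerLimit {α β : Type*} [TopologicalSpace β] (l : Filter α) (S : α → Set β) : Set β :=
  {b | ∀ U ∈ 𝓝 b, ∀ᶠ x in l, (S x ∩ U).Nonempty}

/-- Single-valuedness (at most one value) of a localization of `S` around `(a, b)`, as in the second
half of `StrongMetrReg`. -/
def LocallySingleValuedAt {α β : Type*} [TopologicalSpace α] [TopologicalSpace β]
    (S : α → Set β) (a : α) (b : β) : Prop :=
  ∃ U ∈ 𝓝 b, ∃ V ∈ 𝓝 a, ∀ x ∈ V, (S x ∩ U).Subsingleton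

/-- The graph of `S` near `(a, b)` is the graph of a partial function with Lipschitz constant `κ`.
Neither nonemptiness of the values near `a` nor `b ∈ S a` is part of the notion. -/
def LipschitzAlongGraphAt {α β : Type*} [PseudoEMetricSpace α] [PseudoEMetricSpace β]
    (κ : ℝ≥0) (S : α → Set β) (a : α) (b : β) : Prop :=
  ∀ᶠ pq in 𝓝[svGraph S] (a, b) ×ˢ 𝓝[svGraph S] (a, b),
    edist pq.1.2 pq.2.2 ≤ κ * edist pq.1.1 pq.2.1

theorem mem_innerLimit_iff_forall_ball {α β : Type*} [PseudoMetricSpace β] {l : Filter α}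
    {S : α → Set β} {b : β} :
    b ∈ innerLimit l S ↔ ∀ ε : ℝ, 0 < ε → ∃ V ∈ l, ∀ x ∈ V, (S x ∩ ball b ε).Nonempty := by
  simp_rw [← Filter.eventually_iff_exists_mem]
  exact nhds_basis_ball.forall_iff fun U V hUV h =>
    h.mono fun x hx => hx.mono (inter_subset_inter_right _ hUV)

end LocalizationNotions

section DistanceEstimates

theorem edist_le_coe_mul_edist_iff {α β : Type*} [PseudoMetricSpace α] [PseudoMetricSpace β]
    {κ : ℝ≥0} {x x' : α} {y y' : β} :
    edist x x' ≤ κ * edist y y' ↔ dist x x' ≤ κ * dist y y' := by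
  simp only [edist_nndist, dist_nndist]
  norm_cast

theorem edist_le_infEDist_of_inter_eball_subset_singleton {α : Type*} [PseudoEMetricSpace α]
    {s : Set α} {x x' : α} {r : ℝ≥0∞} (hs : s ∩ eball x r ⊆ {x'}) (hr : infEDist x s < r) :
    edist x x' ≤ infEDist x s := by
  have eq_of_near : ∀ z ∈ s, edist x z < r → z = x' := fun z hz hxz =>
    hs ⟨hz, by rwa [mem_eball, edist_comm]⟩
  obtain ⟨z₀, hz₀, hxz₀⟩ := infEDist_lt_iff.1 hr
  have hx' : edist x x' < r := eq_of_near z₀ hz₀ hxz₀ ▸ hxz₀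
  refine le_infEDist.2 fun z hz => ?_
  rcases lt_or_ge (edist x z) r with hxz | hxz
  · rw [eq_of_near z hz hxz]
  · exact hx'.le.trans hxz

theorem le_mul_infEDist {β : Type*} [PseudoEMetricSpace β] {κ : ℝ≥0} (hκ : 0 < κ) {c : ℝ≥0∞}
    {t : Set β} {y : β} (h : ∀ y' ∈ t, c ≤ κ * edist y y') : c ≤ κ * infEDist y t := by
  have hκ₀ : (κ : ℝ≥0∞) ≠ 0 := ENNReal.coe_ne_zero.2 hκ.ne'
  rw [← ENNReal.div_le_iff' hκ₀ ENNReal.coe_ne_top, le_infEDist]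
  exact fun y' hy' => (ENNReal.div_le_iff' hκ₀ ENNReal.coe_ne_top).2 (h y' hy')

end DistanceEstimates

section Paratingent

variable {X Y : Type*} [NormedAddCommGroup X] [NormedSpace ℝ X]
  [NormedAddCommGroup Y] [NormedSpace ℝ Y]

theorem mapsTo_paratingentCone (L : X →L[ℝ] Y) {Ω : Set X} {Ω' : Set Y} (hL : MapsTo L Ω Ω')
    (x : X) : MapsTo L (paratingentCone Ω x) (paratingentCone Ω' (L x)) := by
  rintro u ⟨t, w, p, ht, ht₀, hw, hp, hpx, hpw⟩
  exact ⟨t, L ∘ w, L ∘ p, ht, ht₀, (L.continuous.tendsto u).comp hw, fun k => hL (hp k),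
    (L.continuous.tendsto x).comp hpx, fun k => by simpa using hL (hpw k)⟩

theorem exists_secants_of_mem_paratingentCone {Ω : Set X} {x u : X}
    (hu : u ∈ paratingentCone Ω x) :
    ∃ (t : ℕ → ℝ) (p q : ℕ → X), (∀ k, 0 < t k) ∧ Tendsto p atTop (𝓝[Ω] x) ∧
      Tendsto q atTop (𝓝[Ω] x) ∧ Tendsto (fun k => (t k)⁻¹ • (q k - p k)) atTop (𝓝 u) := by
  obtain ⟨t, w, p, ht, ht₀, hw, hp, hpx, hpw⟩ := hu
  have hqx : Tendsto (fun k => p k + t k • w k) atTop (𝓝 x) := by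
    simpa using hpx.add (ht₀.smul hw)
  refine ⟨t, p, fun k => p k + t k • w k, ht, tendsto_nhdsWithin_iff.2 ⟨hpx, .of_forall hp⟩,
    tendsto_nhdsWithin_iff.2 ⟨hqx, .of_forall hpw⟩, hw.congr fun k => ?_⟩
  rw [add_sub_cancel_left, inv_smul_smul₀ (ht k).ne']

theorem exists_mem_paratingentCone_of_isCompact {Ω K : Set X} (hK : IsCompact K) {x : X}
    {t : ℕ → ℝ} {p q : ℕ → X} (ht : ∀ k, 0 < t k) (ht₀ : Tendsto t atTop (𝓝 0))
    (hp : ∀ k, p k ∈ Ω) (hq : ∀ k, q k ∈ Ω) (hpx : Tendsto p atTop (𝓝 x))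
    (hpqK : ∀ k, (t k)⁻¹ • (q k - p k) ∈ K) : ∃ u ∈ K, u ∈ paratingentCone Ω x := by
  obtain ⟨u, huK, φ, hφ, hu⟩ := hK.tendsto_subseq hpqK
  refine ⟨u, huK, t ∘ φ, _, p ∘ φ, fun k => ht (φ k), ht₀.comp hφ.tendsto_atTop, hu,
    fun k => hp (φ k), hpx.comp hφ.tendsto_atTop, fun k => ?_⟩
  simpa [smul_inv_smul₀ (ht (φ k)).ne'] using hq (φ k)

end Paratingent

section LipschitzAlongGraph

variable {α β : Type*} {κ : ℝ≥0} {S : α → Set β} {a : α} {b : β}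

theorem LipschitzAlongGraphAt.locallySingleValuedAt [PseudoEMetricSpace α] [EMetricSpace β]
    (h : LipschitzAlongGraphAt κ S a b) : LocallySingleValuedAt S a b := by
  obtain ⟨T, hT, hlip⟩ := Filter.mem_prod_same_iff.1 h
  obtain ⟨W, hW, hWT⟩ := mem_nhdsWithin_iff_exists_mem_nhds_inter.1 hT
  obtain ⟨V, hV, U, hU, hVU⟩ := mem_nhds_prod_iff.1 hW
  refine ⟨U, hU, V, hV, fun x hx y hy y' hy' => edist_le_zero.1 ?_⟩
  have hyT : (x, y) ∈ T := hWT ⟨hVU ⟨hx, hy.2⟩, hy.1⟩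
  have hyT' : (x, y') ∈ T := hWT ⟨hVU ⟨hx, hy'.2⟩, hy'.1⟩
  have hyy' : edist y y' ≤ κ * edist x x := hlip (mk_mem_prod hyT hyT')
  rwa [edist_self, mul_zero] at hyy'

theorem LipschitzAlongGraphAt.exists_ball_forall_edist_le [PseudoMetricSpace α]
    [PseudoMetricSpace β] (hκ : 0 < κ) (h : LipschitzAlongGraphAt κ S a b) :
    ∃ ε > 0, ∀ x ∈ ball a ε, ∀ y ∈ S x ∩ ball b ε, ∀ y' ∈ ball b ε, ∀ x', y' ∈ S x' →
      edist y' y ≤ κ * edist x x' := by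
  obtain ⟨δ, hδ, hlip⟩ := nhdsWithin_basis_ball.prod_self.eventually_iff.1 h
  have : (0 : ℝ) < κ := hκ
  refine ⟨min (δ / 2) (κ * δ / 4), by positivity, fun x hx y ⟨hxy, hy⟩ y' hy' x' hxy' => ?_⟩
  simp only [mem_ball, lt_min_iff] at hx hy hy'
  rw [edist_le_coe_mul_edist_iff]
  rcases lt_or_ge (dist x' a) δ with hx' | hx'
  · have hmem : ((x', y'), (x, y)) ∈
        (ball (a, b) δ ∩ svGraph S) ×ˢ (ball (a, b) δ ∩ svGraph S) := by
      simp only [mem_prod, mem_inter_iff, mem_ball, Prod.dist_eq, max_lt_iff]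
      exact ⟨⟨⟨hx', by linarith⟩, hxy'⟩, ⟨by linarith, by linarith⟩, hxy⟩
    simpa only [dist_comm x] using edist_le_coe_mul_edist_iff.1 (hlip hmem)
  · have hfar : δ / 2 ≤ dist x x' := by linarith [dist_triangle_left x' a x]
    calc dist y' y ≤ dist y' b + dist y b := dist_triangle_right _ _ _
      _ ≤ κ * (δ / 2) := by linarith
      _ ≤ κ * dist x x' := by gcongr

theorem exists_steep_secants_of_not_lipschitzAlongGraphAt [PseudoMetricSpace α]
    [PseudoMetricSpace β] (h : ¬LipschitzAlongGraphAt κ S a b) :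
    ∃ p q : ℕ → α × β, Tendsto p atTop (𝓝 (a, b)) ∧ Tendsto q atTop (𝓝 (a, b)) ∧
      ∀ k, p k ∈ svGraph S ∧ q k ∈ svGraph S ∧
        κ * dist (q k).1 (p k).1 < dist (q k).2 (p k).2 := by
  have hmem : ∀ᶠ qp in 𝓝[svGraph S] (a, b) ×ˢ 𝓝[svGraph S] (a, b),
      qp.1 ∈ svGraph S ∧ qp.2 ∈ svGraph S :=
    eventually_mem_nhdsWithin.prod_mk eventually_mem_nhdsWithin
  obtain ⟨qp, hlim, hqp⟩ :=
    exists_seq_forall_of_frequently ((not_eventually.1 h).and_eventually hmem)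
  refine ⟨fun k => (qp k).2, fun k => (qp k).1,
    (tendsto_snd.comp hlim).mono_right nhdsWithin_le_nhds,
    (tendsto_fst.comp hlim).mono_right nhdsWithin_le_nhds,
    fun k => ⟨(hqp k).2.2, (hqp k).2.1, ?_⟩⟩
  rw [← not_le, ← edist_le_coe_mul_edist_iff]
  exact (hqp k).1

end LipschitzAlongGraph

section OuterNorm

variable {E F : Type*} [NormedAddCommGroup E] [NormedAddCommGroup F]

theorem outerNormSV_le_iff {H : E → Set F} {c : ℝ≥0∞} :
    outerNormSV H ≤ c ↔ ∀ x, ‖x‖ ≤ 1 → ∀ y ∈ H x, (‖y‖₊ : ℝ≥0∞) ≤ c := by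
  simp only [outerNormSV, iSup_le_iff]

end OuterNorm

section StrictGraphicalDerivative

variable {E F : Type*} [NormedAddCommGroup E] [NormedSpace ℝ E]
  [NormedAddCommGroup F] [NormedSpace ℝ F] {κ : ℝ≥0} {S : E → Set F} {a : E} {b : F}

theorem sgDeriv_svInv (S : E → Set F) (a : E) (b : F) :
    sgDeriv (svInv S) b a = svInv (sgDeriv S a b) := by
  ext v u
  constructor
  · exact fun h => mapsTo_paratingentCone
      (ContinuousLinearEquiv.prodComm ℝ F E).toContinuousLinearMap
      (Ω' := svGraph S) (fun _ hp => hp) (b, a) h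
  · exact fun h => mapsTo_paratingentCone
      (ContinuousLinearEquiv.prodComm ℝ E F).toContinuousLinearMap
      (Ω' := svGraph (svInv S)) (fun _ hp => hp) (a, b) h

theorem LipschitzAlongGraphAt.norm_le_of_mem_sgDeriv (h : LipschitzAlongGraphAt κ S a b)
    {u : E} {v : F} (hv : v ∈ sgDeriv S a b u) : ‖v‖ ≤ κ * ‖u‖ := by
  obtain ⟨t, p, q, -, hp, hq, hlim⟩ := exists_secants_of_mem_paratingentCone hv
  have hsecant : ∀ᶠ k in atTop,
      ‖((t k)⁻¹ • (q k - p k)).2‖ ≤ κ * ‖((t k)⁻¹ • (q k - p k)).1‖ := by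
    filter_upwards [(hq.prodMk hp).eventually h] with k hk
    rw [edist_le_coe_mul_edist_iff, dist_eq_norm, dist_eq_norm] at hk
    simp only [Prod.smul_snd, Prod.smul_fst, Prod.snd_sub, Prod.fst_sub, norm_smul]
    rw [mul_left_comm]
    gcongr
  exact le_of_tendsto_of_tendsto hlim.snd_nhds.norm (hlim.fst_nhds.norm.const_mul _) hsecant

theorem LipschitzAlongGraphAt.outerNormSV_sgDeriv_le (h : LipschitzAlongGraphAt κ S a b) :
    outerNormSV (sgDeriv S a b) ≤ κ := by
  refine outerNormSV_le_iff.2 fun u hu v hv => ENNReal.coe_le_coe.2 ?_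
  exact (h.norm_le_of_mem_sgDeriv hv).trans (mul_le_of_le_one_right κ.coe_nonneg hu)

theorem inv_smul_mem_closedBall_prod_sphere {c : ℝ} (hc : 0 < c) {w : E × F}
    (hw : c * ‖w.1‖ < ‖w.2‖) :
    (‖w.2‖ / c)⁻¹ • w ∈ closedBall (0 : E) 1 ×ˢ sphere (0 : F) c := by
  have hw₂ : 0 < ‖w.2‖ := (by positivity : 0 ≤ c * ‖w.1‖).trans_lt hw
  simp only [mem_prod, mem_closedBall_zero_iff, mem_sphere_zero_iff_norm, Prod.smul_fst,
    Prod.smul_snd, norm_smul, inv_div, norm_div, norm_norm, Real.norm_of_nonneg hc.le]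
  refine ⟨?_, div_mul_cancel₀ c hw₂.ne'⟩
  rw [div_mul_eq_mul_div]
  exact div_le_one_of_le₀ hw.le hw₂.le

theorem lipschitzAlongGraphAt_of_outerNormSV_sgDeriv_lt [ProperSpace E] [ProperSpace F]
    (h : outerNormSV (sgDeriv S a b) < κ) : LipschitzAlongGraphAt κ S a b := by
  have hκ : (0 : ℝ) < κ := by exact_mod_cast zero_le.trans_lt h
  by_contra hlip
  obtain ⟨p, q, hp, hq, hpq⟩ := exists_steep_secants_of_not_lipschitzAlongGraphAt hlip
  have hsteep : ∀ k, κ * ‖(q k - p k).1‖ < ‖(q k - p k).2‖ := fun k => by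
    simpa only [dist_eq_norm, Prod.fst_sub, Prod.snd_sub] using (hpq k).2.2
  have ht : ∀ k, 0 < ‖(q k - p k).2‖ / κ := fun k =>
    div_pos ((by positivity : 0 ≤ κ * ‖(q k - p k).1‖).trans_lt (hsteep k)) hκ
  have ht₀ : Tendsto (fun k => ‖(q k - p k).2‖ / κ) atTop (𝓝 0) := by
    simpa using (hq.sub hp).snd_nhds.norm.div_const (κ : ℝ)
  obtain ⟨⟨u, v⟩, ⟨hu, hv⟩, huv⟩ := exists_mem_paratingentCone_of_isCompact
    ((isCompact_closedBall (0 : E) 1).prod (isCompact_sphere (0 : F) κ)) ht ht₀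
    (fun k => (hpq k).1) (fun k => (hpq k).2.1) hp
    (fun k => inv_smul_mem_closedBall_prod_sphere hκ (hsteep k))
  have hle : (‖v‖₊ : ℝ≥0∞) ≤ outerNormSV (sgDeriv S a b) :=
    outerNormSV_le_iff.1 le_rfl u (mem_closedBall_zero_iff.1 hu) v huv
  have hvκ : ‖v‖₊ = κ := NNReal.eq (mem_sphere_zero_iff_norm.1 hv)
  exact (hvκ ▸ hle).not_gt h

end StrictGraphicalDerivative

section MetricRegularity

variable {E F : Type*} [NormedAddCommGroup E] [NormedAddCommGroup F]
  {κ : ℝ≥0} {Fm : E → Set F} {xbar : E} {ybar : F}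

theorem MetrRegWith.lipschitzAlongGraphAt_svInv (hreg : MetrRegWith κ Fm xbar ybar)
    (hsv : LocallySingleValuedAt (svInv Fm) ybar xbar) :
    LipschitzAlongGraphAt κ (svInv Fm) ybar xbar := by
  obtain ⟨U₁, hU₁, V₁, hV₁, hreg⟩ := hreg
  obtain ⟨U₂, hU₂, V₂, hV₂, hsv⟩ := hsv
  obtain ⟨r, hr, hrU₂⟩ := EMetric.mem_nhds_iff.1 hU₂
  set l := 𝓝[svGraph (svInv Fm)] (ybar, xbar)
  have hp : Tendsto Prod.fst (l ×ˢ l) (𝓝 (ybar, xbar)) := tendsto_fst.mono_right nhdsWithin_le_nhds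
  have hq : Tendsto Prod.snd (l ×ˢ l) (𝓝 (ybar, xbar)) := tendsto_snd.mono_right nhdsWithin_le_nhds
  have hκdist : Tendsto (fun pq => κ * edist pq.1.1 pq.2.1) (l ×ˢ l) (𝓝 0) := by
    simpa using ENNReal.Tendsto.const_mul (hp.fst_nhds.edist hq.fst_nhds)
      (.inr (ENNReal.coe_ne_top (r := κ)))
  have hr₂ : 0 < r / 2 := ENNReal.half_pos hr.ne'
  filter_upwards [(eventually_mem_nhdsWithin : ∀ᶠ p in l, p ∈ svGraph (svInv Fm)).prod_mk
      (eventually_mem_nhdsWithin : ∀ᶠ q in l, q ∈ svGraph (svInv Fm)),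
    hp.snd_nhds hU₁, hp.snd_nhds (eball_mem_nhds xbar hr₂), hq.snd_nhds hU₂,
    hq.fst_nhds hV₁, hq.fst_nhds hV₂, hκdist.eventually_lt_const hr₂]
    with ⟨⟨y, x⟩, y', x'⟩ ⟨hxy, hxy'⟩ hx hxr hx' hyV₁ hyV₂ hlt
  have hle : infEDist x (svInv Fm y') ≤ κ * edist y y' := by
    refine (hreg x hx y' hyV₁).trans ?_
    rw [edist_comm y y']
    gcongr
    exact infEDist_le_edist_of_mem hxy
  refine (edist_le_infEDist_of_inter_eball_subset_singleton ?_ (hle.trans_lt hlt)).trans hle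
  rintro z ⟨hz, hzr⟩
  have hzU₂ : z ∈ U₂ := hrU₂ <| calc
    edist z xbar ≤ edist z x + edist x xbar := edist_triangle _ _ _
    _ < r / 2 + r / 2 := ENNReal.add_lt_add hzr hxr
    _ = r := ENNReal.add_halves r
  exact hsv y' hyV₂ ⟨hz, hzU₂⟩ ⟨hxy', hx'⟩

theorem LipschitzAlongGraphAt.metrRegWith (h : LipschitzAlongGraphAt κ (svInv Fm) ybar xbar)
    (hκ : 0 < κ) (hinner : xbar ∈ innerLimit (𝓝 ybar) (svInv Fm)) :
    MetrRegWith κ Fm xbar ybar := by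
  obtain ⟨ε, hε, hlip⟩ := h.exists_ball_forall_edist_le hκ
  have hball : ball xbar ε ∈ 𝓝 xbar := ball_mem_nhds xbar hε
  refine ⟨_, hball, _, inter_mem (hinner _ hball) (ball_mem_nhds ybar hε),
    fun x hx y ⟨⟨z, hz⟩, hy⟩ => le_mul_infEDist hκ fun y' hy' => ?_⟩
  exact (infEDist_le_edist_of_mem hz.1).trans (hlip y hy z hz x hx y' hy')

variable [NormedSpace ℝ E] [NormedSpace ℝ F]

theorem MetrRegWith.outerNormSV_svInv_sgDeriv_le (hreg : MetrRegWith κ Fm xbar ybar)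
    (hsv : LocallySingleValuedAt (svInv Fm) ybar xbar) :
    outerNormSV (svInv (sgDeriv Fm xbar ybar)) ≤ κ :=
  sgDeriv_svInv Fm xbar ybar ▸ (hreg.lipschitzAlongGraphAt_svInv hsv).outerNormSV_sgDeriv_le

end MetricRegularity

theorem sgDeriv_criterion_for_strong_metric_regularity_general {E F : Type*}
    [NormedAddCommGroup E] [NormedSpace ℝ E] [ProperSpace E]
    [NormedAddCommGroup F] [NormedSpace ℝ F] [ProperSpace F]
    (Fm : E → Set F) (xbar : E) (ybar : F) :
    (StrongMetrReg Fm xbar ybar → outerNormSV (svInv (sgDeriv Fm xbar ybar)) < ⊤) ∧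
    (xbar ∈ innerLimit (𝓝 ybar) (svInv Fm) →
      outerNormSV (svInv (sgDeriv Fm xbar ybar)) < ⊤ →
      StrongMetrReg Fm xbar ybar ∧
        regMod Fm xbar ybar = outerNormSV (svInv (sgDeriv Fm xbar ybar))) := by
  refine ⟨fun ⟨⟨κ, hreg⟩, hsv⟩ =>
    (hreg.outerNormSV_svInv_sgDeriv_le hsv).trans_lt ENNReal.coe_lt_top, fun hinner hfin => ?_⟩
  have hlip : ∀ κ : ℝ≥0, outerNormSV (svInv (sgDeriv Fm xbar ybar)) < κ →
      LipschitzAlongGraphAt κ (svInv Fm) ybar xbar := fun κ hκ =>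
    lipschitzAlongGraphAt_of_outerNormSV_sgDeriv_lt (sgDeriv_svInv Fm xbar ybar ▸ hκ)
  have hreg : ∀ κ : ℝ≥0, outerNormSV (svInv (sgDeriv Fm xbar ybar)) < κ →
      MetrRegWith κ Fm xbar ybar := fun κ hκ =>
    (hlip κ hκ).metrRegWith (ENNReal.coe_pos.1 (zero_le.trans_lt hκ)) hinner
  obtain ⟨κ, hκ, -⟩ := ENNReal.lt_iff_exists_nnreal_btwn.1 hfin
  have hsv : LocallySingleValuedAt (svInv Fm) ybar xbar := (hlip κ hκ).locallySingleValuedAt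
  refine ⟨⟨⟨κ, hreg κ hκ⟩, hsv⟩, le_antisymm ?_ ?_⟩
  · refine le_of_forall_gt_imp_ge_of_dense fun c hc => ?_
    obtain ⟨κ', hκ', hκc⟩ := ENNReal.lt_iff_exists_nnreal_btwn.1 hc
    exact (iInf₂_le κ' (hreg κ' hκ')).trans hκc.le
  · exact le_iInf₂ fun κ' hκ' => hκ'.outerNormSV_svInv_sgDeriv_le hsv

/-- Strict graphical derivative criterion for strong metric regularity. -/
theorem sgDeriv_criterion_for_strong_metric_regularity {n m : ℕ}
    (Fm : EuclideanSpace ℝ (Fin n) → Set (EuclideanSpace ℝ (Fin m)))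
    (xbar : EuclideanSpace ℝ (Fin n)) (ybar : EuclideanSpace ℝ (Fin m))
    (hgr : ybar ∈ Fm xbar) :
    (StrongMetrReg Fm xbar ybar → outerNormSV (svInv (sgDeriv Fm xbar ybar)) < ⊤) ∧
    (LocClosedAt (svGraph Fm) (xbar, ybar) →
      (∀ ε : ℝ, 0 < ε → ∃ V ∈ 𝓝 ybar, ∀ y ∈ V, (svInv Fm y ∩ Metric.ball xbar ε).Nonempty) →
      outerNormSV (svInv (sgDeriv Fm xbar ybar)) < ⊤ →
      StrongMetrReg Fm xbar ybar ∧
        regMod Fm xbar ybar = outerNormSV (svInv (sgDeriv Fm xbar ybar))) := by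
  have h := sgDeriv_criterion_for_strong_metric_regularity_general Fm xbar ybar
  exact ⟨h.1, fun _ hinner => h.2 (mem_innerLimit_iff_forall_ball.2 hinner)⟩

end
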